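/- arXiv:2408.16994 — 2 statements merged into one kernel-verified Lean document; each statement's English description precedes it below -/
import Mathlib

section
/- Let H be a complex separable Hilbert space and let A be a compact bounded linear operator on H with ‖A‖ < 1. Then the family {|A^n|^{1/n} : n ∈ ℕ} is collectively compact, i.e. the set {|A^n|^{1/n} x : n ∈ ℕ, x ∈ H, ‖x‖ ≤ 1} has compact closure in H. -/
/-!
The proof shows that the operators `|A ^ n| ^ (1 / n)` are uniformly small off finite-dimensional
subspaces: for every `ε > 0` there is a finite-dimensional `W` such that
`‖|A ^ n| ^ (1 / n) m‖ ≤ ε ‖m‖` for all `n ≥ 1` and `m ∈ Wᗮ`. Since these operators are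
self-adjoint contractions, their values on the unit ball are then within `ε` of the compact unit
ball of `W`, so the union of the images is totally bounded (`totallyBounded_adjoint_image`).

The root is controlled by interpolation. If `T` is self-adjoint, `k ↦ ‖T ^ k x‖` is log-convex, so
`‖T x‖ ^ n ≤ ‖T ^ n x‖ ‖x‖ ^ (n - 1)`. For `T = |A ^ n| ^ (1 / n)` one has
`‖T ^ n x‖ = ‖|A ^ n| x‖ = ‖A ^ n x‖`, so a bound `‖A ^ n m‖ ≤ ε ^ n ‖m‖` yields
`‖T m‖ ≤ ε ‖m‖` (`norm_absPow_apply_le`).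

It remains to bound `A ^ n` on `Wᗮ`. For finitely many `n` this is compactness of `A ^ n`
(`exists_finiteDimensional_small`). For all large `n` simultaneously
(`exists_finiteDimensional_pow_decay`), `W` is built by successive extension, keeping `Wᗮ`
invariant under `A`. As long as the compact operator `B = A|_{Wᗮ}` has spectral radius at least `ε`,
the Fredholm alternative gives an eigenvector of `B†` with eigenvalue of modulus at least `ε`, which
is added to `W`. The process stops, for otherwise `A` would map an infinite family of unit vectors
to an `ε`-separated set; and when the spectral radius is below `ε`, Gelfand's formula gives the
decay.
-/

open scoped NNReal InnerProductSpace
open Filter Topology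

/-- The absolute value `|T| = (T*T)^{1/2}` of a bounded operator on a complex Hilbert space. -/
noncomputable def opAbs {H : Type*} [NormedAddCommGroup H] [InnerProductSpace ℂ H]
    [CompleteSpace H] (T : H →L[ℂ] H) : H →L[ℂ] H :=
  CFC.sqrt (ContinuousLinearMap.adjoint T * T)

/-- `|T ^ n| ^ (1 / n)`, via the continuous functional calculus. -/
noncomputable def absPow {H : Type*} [NormedAddCommGroup H] [InnerProductSpace ℂ H]
    [CompleteSpace H] (T : H →L[ℂ] H) (n : ℕ) : H →L[ℂ] H :=
  CFC.nnrpow (opAbs (T ^ n)) ((n : ℝ≥0))⁻¹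

section

variable {E : Type*} [NormedAddCommGroup E] [InnerProductSpace ℂ E]

/-! ### Compactness and finite-dimensional subspaces -/

/-- A compact operator is arbitrarily small off a finite-dimensional subspace. If `y₁, …, y_k` is a
finite `δ`-net of the image of the unit ball under `K`, take the span of the vectors `K† yᵢ`: its
orthogonal complement is mapped by `K` into the orthogonal complement of the net. -/
theorem exists_finiteDimensional_small [CompleteSpace E] (K : E →L[ℂ] E)
    (hK : IsCompactOperator K) {δ : ℝ} (hδ : 0 < δ) :
    ∃ W : Submodule ℂ E, FiniteDimensional ℂ W ∧ ∀ m ∈ Wᗮ, ‖K m‖ ≤ δ * ‖m‖ := by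
  obtain ⟨C, hC, hCK⟩ := hK.image_closedBall_subset_compact (f := (K : E →ₗ[ℂ] E)) 1
  obtain ⟨t, -, htf, htC⟩ := hC.finite_cover_balls hδ
  refine ⟨Submodule.span ℂ ((ContinuousLinearMap.adjoint K) '' t),
    FiniteDimensional.span_of_finite ℂ (htf.image _), ?_⟩
  have key : ∀ m ∈ (Submodule.span ℂ ((ContinuousLinearMap.adjoint K) '' t))ᗮ, ‖m‖ ≤ 1 →
      ‖K m‖ ≤ δ := by
    intro m hm hm1
    have h1 : K m ∈ C := hCK ⟨m, by simpa using hm1, rfl⟩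
    obtain ⟨y, hy, hyK⟩ : ∃ y ∈ t, ‖K m - y‖ < δ := by
      simpa [dist_eq_norm] using htC h1
    have h2 : ⟪y, K m⟫_ℂ = 0 := by
      rw [← ContinuousLinearMap.adjoint_inner_left]
      exact hm _ (Submodule.subset_span ⟨y, hy, rfl⟩)
    have h3 : ‖K m‖ * ‖K m‖ ≤ ‖K m - y‖ * ‖K m‖ := by
      have h4 : ⟪K m - y, K m⟫_ℂ = ⟪K m, K m⟫_ℂ := by rw [inner_sub_left, h2, sub_zero]
      have h5 := norm_inner_le_norm (𝕜 := ℂ) (K m - y) (K m)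
      rwa [h4, inner_self_eq_norm_sq_to_K, norm_pow, RCLike.norm_ofReal, abs_norm, pow_two] at h5
    rcases (norm_nonneg (K m)).eq_or_lt with h0 | h0
    · rw [← h0]; exact hδ.le
    · exact (le_of_mul_le_mul_right h3 h0).trans hyK.le
  intro m hm
  rcases eq_or_ne m 0 with rfl | h0
  · simp
  have hp : 0 < ‖m‖ := norm_pos_iff.mpr h0
  have := key (((‖m‖⁻¹ : ℝ) : ℂ) • m) (Submodule.smul_mem _ _ hm)
    (by simp [norm_smul, hp.ne'])
  rw [map_smul, norm_smul, Complex.norm_real, norm_inv, norm_norm, inv_mul_le_iff₀ hp] at this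
  linarith

/-- Criterion for collective compactness: if a bounded family of operators is uniformly small off
finite-dimensional subspaces, then the family of adjoints is collectively compact. -/
theorem totallyBounded_adjoint_image [CompleteSpace E] (F : Set (E →L[ℂ] E)) (C : ℝ)
    (hC : ∀ T ∈ F, ‖T‖ ≤ C)
    (hF : ∀ ε : ℝ, 0 < ε → ∃ W : Submodule ℂ E, FiniteDimensional ℂ W ∧
      ∀ T ∈ F, ∀ m ∈ Wᗮ, ‖T m‖ ≤ ε * ‖m‖) :
    TotallyBounded {y : E | ∃ T ∈ F, ∃ x : E, ‖x‖ ≤ 1 ∧ y = ContinuousLinearMap.adjoint T x} := by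
  rw [Metric.totallyBounded_iff]
  intro ε hε
  obtain ⟨W, hW, hWF⟩ := hF (ε / 2) (half_pos hε)
  have : ProperSpace W := FiniteDimensional.proper ℂ W
  have hB : IsCompact ((Subtype.val : W → E) '' Metric.closedBall 0 C) :=
    (isCompact_closedBall _ _).image continuous_subtype_val
  obtain ⟨t, -, htf, ht⟩ := hB.finite_cover_balls (half_pos hε)
  refine ⟨t, htf, ?_⟩
  rintro y ⟨T, hT, x, hx, rfl⟩
  set y := ContinuousLinearMap.adjoint T x with hy
  have hyC : ‖y‖ ≤ C := by
    calc ‖y‖ ≤ ‖ContinuousLinearMap.adjoint T‖ * ‖x‖ := ContinuousLinearMap.le_opNorm _ _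
      _ ≤ ‖T‖ * 1 := by
        rw [LinearIsometryEquiv.norm_map]
        gcongr
      _ ≤ C := by simpa using hC T hT
  have h1 : ((W.orthogonalProjectionOnto y : W) : E) ∈
      (Subtype.val : W → E) '' Metric.closedBall 0 C := by
    refine ⟨_, ?_, rfl⟩
    simpa using (W.norm_orthogonalProjectionOnto_apply_le y).trans hyC
  set q : E := y - W.orthogonalProjectionOnto y with hq
  have hqW : q ∈ Wᗮ := W.sub_starProjection_mem_orthogonal y
  have hq2 : ‖q‖ ≤ ε / 2 := by
    -- `‖q‖² = ⟪y, q⟫ = ⟪x, T q⟫ ≤ ‖T q‖`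
    have h3 : ⟪y, q⟫_ℂ = ⟪q, q⟫_ℂ := by
      have : ⟪((W.orthogonalProjectionOnto y : W) : E), q⟫_ℂ = 0 := hqW _ (Subtype.property _)
      conv_rhs => rw [hq, inner_sub_left, ← hq, this, sub_zero]
    have h4 : ‖q‖ * ‖q‖ ≤ (ε / 2) * ‖q‖ := by
      have h5 : ‖⟪y, q⟫_ℂ‖ ≤ (ε / 2) * ‖q‖ := by
        rw [hy, ContinuousLinearMap.adjoint_inner_left]
        calc ‖⟪x, T q⟫_ℂ‖ ≤ ‖x‖ * ‖T q‖ := norm_inner_le_norm _ _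
          _ ≤ 1 * ‖T q‖ := by gcongr
          _ ≤ _ := by simpa using hWF T hT q hqW
      rwa [h3, inner_self_eq_norm_sq_to_K, norm_pow, RCLike.norm_ofReal, abs_norm, pow_two] at h5
    rcases (norm_nonneg q).eq_or_lt with h0 | h0
    · rw [← h0]; positivity
    · exact le_of_mul_le_mul_right h4 h0
  obtain ⟨z, hz, hzd⟩ := Set.mem_iUnion₂.mp (ht h1)
  refine Set.mem_iUnion₂.mpr ⟨z, hz, ?_⟩
  rw [Metric.mem_ball] at hzd ⊢
  calc dist y z ≤ dist y (W.orthogonalProjectionOnto y : E) +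
        dist (W.orthogonalProjectionOnto y : E) z := dist_triangle _ _ _
    _ < ε / 2 + ε / 2 := by
      rw [dist_eq_norm y]
      exact add_lt_add_of_le_of_lt hq2 hzd
    _ = ε := add_halves ε

theorem isCompactOperator_adjoint [CompleteSpace E] (K : E →L[ℂ] E) (hK : IsCompactOperator K) :
    IsCompactOperator (ContinuousLinearMap.adjoint K) := by
  have h := totallyBounded_adjoint_image {K} ‖K‖ (by simp) fun ε hε => by
    simpa using exists_finiteDimensional_small K hK hε
  have := (isCompactOperator_iff_image_closedBall_subset_compact
    (ContinuousLinearMap.adjoint K : E →ₗ[ℂ] E) one_pos).mpr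
    ⟨_, h.closure.isCompact_of_isClosed isClosed_closure, ?_⟩
  · exact this
  · rintro _ ⟨x, hx, rfl⟩
    exact subset_closure ⟨K, rfl, x, by simpa using hx, rfl⟩

/-! ### Decay of powers off a finite-dimensional subspace -/

/-- Dichotomy for a compact operator on the whole space: either its powers eventually decay like
`ε ^ n`, or its adjoint has an eigenvector for an eigenvalue of modulus at least `ε`; the latter is
expressed as a unit vector orthogonal to the range of `B - l`. -/
theorem pow_decay_or_exists_orthogonal [CompleteSpace E] (B : E →L[ℂ] E)
    (hB : IsCompactOperator B) {ε : ℝ} (hε : 0 < ε) :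
    (∃ N : ℕ, ∀ n ≥ N, ‖B ^ n‖ ≤ ε ^ n) ∨
      ∃ (l : ℂ) (e : E), ε ≤ ‖l‖ ∧ ‖e‖ = 1 ∧ ∀ m, ⟪e, B m - l • m⟫_ℂ = 0 := by
  rcases lt_or_ge (spectralRadius ℂ B) (ENNReal.ofReal ε) with h | h
  · left
    have h1 := (spectrum.pow_norm_pow_one_div_tendsto_nhds_spectralRadius B).eventually_lt_const h
    obtain ⟨N, hN⟩ := eventually_atTop.mp (h1.and (eventually_ge_atTop 1))
    refine ⟨N, fun n hn => ?_⟩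
    obtain ⟨h2, h3⟩ := hN n hn
    have h4 : ‖B ^ n‖ ^ (1 / n : ℝ) < ε := (ENNReal.ofReal_lt_ofReal_iff hε).mp h2
    have h5 : (‖B ^ n‖ ^ (1 / n : ℝ)) ^ n ≤ ε ^ n := by gcongr
    rwa [one_div, Real.rpow_inv_natCast_pow (norm_nonneg _) (by omega)] at h5
  · right
    have hpos : 0 < spectralRadius ℂ B := lt_of_lt_of_le (by simpa using hε) h
    have hne : (spectrum ℂ B).Nonempty := by
      by_contra hcon
      rw [Set.not_nonempty_iff_eq_empty] at hcon
      simp [spectralRadius, hcon] at hpos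
    obtain ⟨l, hl, hlr⟩ := spectrum.exists_nnnorm_eq_spectralRadius_of_nonempty hne
    have hlε : ε ≤ ‖l‖ := by
      rw [← hlr] at h
      have h' : ENNReal.ofReal ε ≤ ENNReal.ofReal ‖l‖ := by
        rwa [ofReal_norm, enorm_eq_nnnorm]
      exact (ENNReal.ofReal_le_ofReal_iff (norm_nonneg _)).mp h'
    have hl0 : star l ≠ 0 := by
      rw [star_ne_zero]
      exact norm_pos_iff.mp (hε.trans_le hlε)
    have hs : star l ∈ spectrum ℂ (ContinuousLinearMap.adjoint B) := by
      rw [← ContinuousLinearMap.star_eq_adjoint, spectrum.map_star]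
      simpa using hl
    have hev := ((isCompactOperator_adjoint B hB).hasEigenvalue_iff_mem_spectrum hl0).mpr hs
    obtain ⟨v, hv⟩ := hev.exists_hasEigenvector
    have hv0 : 0 < ‖v‖ := norm_pos_iff.mpr hv.2
    have hvB : ContinuousLinearMap.adjoint B v = star l • v := hv.apply_eq_smul
    refine ⟨l, ((‖v‖⁻¹ : ℝ) : ℂ) • v, hlε, by simp [norm_smul, hv0.ne'], fun m => ?_⟩
    rw [inner_smul_left, inner_sub_right, ← ContinuousLinearMap.adjoint_inner_left, hvB,
      inner_smul_left, inner_smul_right]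
    simp

/-- The extension step: if `Wᗮ` is `A`-invariant and the powers of `A` do not eventually decay like
`ε ^ n` on it, then `W` is enlarged by one unit vector `e ∈ Wᗮ`, keeping the invariance, such that
`A` acts on the one-dimensional quotient by a scalar of modulus at least `ε`. -/
theorem pow_decay_or_extend [CompleteSpace E] (A : E →L[ℂ] E) (hA : IsCompactOperator A) {ε : ℝ}
    (hε : 0 < ε) (W : Submodule ℂ E) [FiniteDimensional ℂ W] (hW : ∀ m ∈ Wᗮ, A m ∈ Wᗮ) :
    (∃ N : ℕ, ∀ n ≥ N, ∀ m ∈ Wᗮ, ‖(A ^ n) m‖ ≤ ε ^ n * ‖m‖) ∨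
      ∃ W' : Submodule ℂ E, FiniteDimensional ℂ W' ∧ (∀ m ∈ W'ᗮ, A m ∈ W'ᗮ) ∧ W ≤ W' ∧
        ∃ (l : ℂ) (e : E), ε ≤ ‖l‖ ∧ ‖e‖ = 1 ∧ e ∈ W' ∧ e ∈ Wᗮ ∧ A e - l • e ∈ W'ᗮ := by
  let B : Wᗮ →L[ℂ] Wᗮ := A.restrict hW
  have hB : IsCompactOperator B :=
    IsCompactOperator.restrict (f := (A : E →ₗ[ℂ] E)) hA hW (Submodule.isClosed_orthogonal W)
  rcases pow_decay_or_exists_orthogonal B hB hε with ⟨N, hN⟩ | ⟨l, e, hl, he, hBe⟩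
  · left
    refine ⟨N, fun n hn m hm => ?_⟩
    have hpow : ∀ (n : ℕ) (m : Wᗮ), (((B ^ n) m : Wᗮ) : E) = (A ^ n) m := by
      intro n
      induction n with
      | zero => simp
      | succ k ih =>
        intro m
        rw [pow_succ, pow_succ]
        exact ih (B m)
    calc ‖(A ^ n) m‖ = ‖(B ^ n) ⟨m, hm⟩‖ := congrArg norm (hpow n ⟨m, hm⟩).symm
      _ ≤ ‖B ^ n‖ * ‖(⟨m, hm⟩ : Wᗮ)‖ := ContinuousLinearMap.le_opNorm _ _
      _ ≤ ε ^ n * ‖m‖ := by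
        gcongr
        · exact hN n hn
        · exact le_rfl
  · right
    have hmem : ∀ m : E, m ∈ (W ⊔ Submodule.span ℂ {(e : E)})ᗮ ↔ m ∈ Wᗮ ∧ ⟪(e : E), m⟫_ℂ = 0 := by
      intro m
      rw [← Submodule.inf_orthogonal, Submodule.mem_inf,
        Submodule.mem_orthogonal_singleton_iff_inner_right]
    have hBe' : ∀ m ∈ Wᗮ, ⟪(e : E), A m - l • m⟫_ℂ = 0 := fun m hm => hBe ⟨m, hm⟩
    refine ⟨W ⊔ Submodule.span ℂ {(e : E)}, inferInstance, fun m hm => ?_, le_sup_left, l, e, hl,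
      he, ?_, e.2, ?_⟩
    · rw [hmem] at hm ⊢
      refine ⟨hW m hm.1, ?_⟩
      have := hBe' m hm.1
      rwa [inner_sub_right, inner_smul_right, hm.2, mul_zero, sub_zero] at this
    · exact Submodule.mem_sup_right (Submodule.mem_span_singleton_self _)
    · rw [hmem]
      exact ⟨Submodule.sub_mem _ (hW _ e.2) (Submodule.smul_mem _ _ e.2), hBe' _ e.2⟩

/-- The part of the Riesz theory of `A` that is needed: off a finite-dimensional subspace, the
powers of `A` eventually decay like `ε ^ n`. Otherwise the extension step could be iterated forever,
giving unit vectors `e i` whose images under `A` are at mutual distance at least `ε`. -/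
theorem exists_finiteDimensional_pow_decay [CompleteSpace E] (A : E →L[ℂ] E)
    (hA : IsCompactOperator A) {ε : ℝ} (hε : 0 < ε) :
    ∃ W : Submodule ℂ E, FiniteDimensional ℂ W ∧
      ∃ N : ℕ, ∀ n ≥ N, ∀ m ∈ Wᗮ, ‖(A ^ n) m‖ ≤ ε ^ n * ‖m‖ := by
  by_contra hcon
  let S := {W : Submodule ℂ E // FiniteDimensional ℂ W ∧ ∀ m ∈ Wᗮ, A m ∈ Wᗮ}
  have step : ∀ W : S, ∃ (W' : S) (l : ℂ) (e : E), W.1 ≤ W'.1 ∧ ε ≤ ‖l‖ ∧ ‖e‖ = 1 ∧ e ∈ W'.1 ∧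
      e ∈ (W.1)ᗮ ∧ A e - l • e ∈ (W'.1)ᗮ := by
    rintro ⟨W, hf, hW⟩
    rcases pow_decay_or_extend A hA hε W hW with h | ⟨W', h1, h2, h3, l, e, h4⟩
    · exact absurd ⟨W, hf, h⟩ hcon
    · exact ⟨⟨W', h1, h2⟩, l, e, h3, h4⟩
  choose f l e hle hl he heW' heW hAe using step
  let w : ℕ → S := fun n => f^[n] ⟨⊥, inferInstance, by simp⟩
  have hw : ∀ n, w (n + 1) = f (w n) := fun n => Function.iterate_succ_apply' _ _ _
  have hmono : Monotone fun n => (w n).1 := by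
    refine monotone_nat_of_le_succ fun n => ?_
    rw [hw]; exact hle _
  have hsep : ∀ i j, i < j → ε ≤ ‖A (e (w i)) - A (e (w j))‖ := by
    intro i j hij
    have h1 : e (w i) ∈ (w (i + 1)).1 := by rw [hw]; exact heW' _
    have h2 : A (e (w j)) ∈ ((w (i + 1)).1)ᗮ :=
      (w (i + 1)).2.2 _ (Submodule.orthogonal_le (hmono (Nat.succ_le_of_lt hij)) (heW (w j)))
    have h3 : A (e (w i)) - l (w i) • e (w i) ∈ ((w (i + 1)).1)ᗮ := by rw [hw]; exact hAe _
    have h4 : ⟪e (w i), A (e (w i)) - A (e (w j))⟫_ℂ = l (w i) := by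
      have h5 := h3 _ h1
      rw [inner_sub_right, inner_smul_right, inner_self_eq_norm_sq_to_K, he, sub_eq_zero] at h5
      rw [inner_sub_right, h2 _ h1, h5]
      simp
    calc ε ≤ ‖l (w i)‖ := hl _
      _ ≤ ‖e (w i)‖ * ‖A (e (w i)) - A (e (w j))‖ := by rw [← h4]; exact norm_inner_le_norm _ _
      _ = _ := by rw [he, one_mul]
  obtain ⟨C, hC, hCA⟩ := hA.image_closedBall_subset_compact (f := (A : E →ₗ[ℂ] E)) 1
  obtain ⟨y, -, φ, hφ, hy⟩ := hC.tendsto_subseq (x := fun n => A (e (w n)))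
    fun n => hCA ⟨e (w n), by simp [he], rfl⟩
  obtain ⟨N, hN⟩ := Metric.cauchySeq_iff'.mp hy.cauchySeq ε hε
  have h1 := hN (N + 1) (Nat.le_succ N)
  rw [dist_comm, dist_eq_norm] at h1
  exact absurd (hsep _ _ (hφ (Nat.lt_succ_self N))) (not_le.mpr h1)

/-! ### Interpolation for roots of the absolute value -/

/-- Log-convexity of `k ↦ ‖T ^ k x‖` for a self-adjoint `T`, giving
`‖T x‖ ^ n ≤ ‖T ^ n x‖ * ‖x‖ ^ (n - 1)`. -/
theorem norm_apply_pow_succ_le [CompleteSpace E] (T : E →L[ℂ] E) (hT : IsSelfAdjoint T) (x : E)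
    (k : ℕ) : ‖T x‖ ^ (k + 1) ≤ ‖(T ^ (k + 1)) x‖ * ‖x‖ ^ k := by
  have hT' : ∀ u v, ⟪T u, v⟫_ℂ = ⟪u, T v⟫_ℂ := fun u v => by
    rw [← ContinuousLinearMap.adjoint_inner_left, ← ContinuousLinearMap.star_eq_adjoint, hT.star_eq]
  have hs : ∀ k u, (T ^ (k + 1)) u = T ((T ^ k) u) := fun k u => by rw [pow_succ']; rfl
  have hconv : ∀ k, ‖(T ^ (k + 1)) x‖ ^ 2 ≤ ‖(T ^ k) x‖ * ‖(T ^ (k + 2)) x‖ := by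
    intro k
    have h := norm_inner_le_norm (𝕜 := ℂ) ((T ^ k) x) ((T ^ (k + 2)) x)
    rwa [hs (k + 1), ← hT', ← hs, inner_self_eq_norm_sq_to_K, norm_pow, RCLike.norm_ofReal,
      abs_norm, ← hs] at h
  have hratio : ∀ k, ‖T x‖ * ‖(T ^ k) x‖ ≤ ‖(T ^ (k + 1)) x‖ * ‖x‖ := by
    intro k
    induction k with
    | zero => simp
    | succ k ih =>
      rcases (norm_nonneg ((T ^ (k + 1)) x)).eq_or_lt with h0 | h0
      · rw [← h0, mul_zero]; positivity
      · refine le_of_mul_le_mul_right ?_ h0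
        calc ‖T x‖ * ‖(T ^ (k + 1)) x‖ * ‖(T ^ (k + 1)) x‖
            = ‖T x‖ * ‖(T ^ (k + 1)) x‖ ^ 2 := by ring
          _ ≤ ‖T x‖ * (‖(T ^ k) x‖ * ‖(T ^ (k + 2)) x‖) := by gcongr; exact hconv k
          _ = ‖T x‖ * ‖(T ^ k) x‖ * ‖(T ^ (k + 2)) x‖ := by ring
          _ ≤ ‖(T ^ (k + 1)) x‖ * ‖x‖ * ‖(T ^ (k + 2)) x‖ := by gcongr
          _ = _ := by ring
  induction k with
  | zero => simp
  | succ k ih =>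
    calc ‖T x‖ ^ (k + 2) = ‖T x‖ * ‖T x‖ ^ (k + 1) := by ring
      _ ≤ ‖T x‖ * (‖(T ^ (k + 1)) x‖ * ‖x‖ ^ k) := by gcongr
      _ = ‖T x‖ * ‖(T ^ (k + 1)) x‖ * ‖x‖ ^ k := by ring
      _ ≤ ‖(T ^ (k + 2)) x‖ * ‖x‖ * ‖x‖ ^ k := mul_le_mul_of_nonneg_right (hratio (k + 1)) (by positivity)
      _ = _ := by ring

theorem norm_opAbs_apply [CompleteSpace E] (T : E →L[ℂ] E) (x : E) : ‖opAbs T x‖ = ‖T x‖ := by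
  have h0 : 0 ≤ ContinuousLinearMap.adjoint T * T := star_mul_self_nonneg T
  have h1 : opAbs T * opAbs T = ContinuousLinearMap.adjoint T * T := CFC.sqrt_mul_sqrt_self _ h0
  have h2 : IsSelfAdjoint (opAbs T) := (CFC.sqrt_nonneg _).isSelfAdjoint
  have h3 : ⟪opAbs T x, opAbs T x⟫_ℂ = ⟪T x, T x⟫_ℂ := by
    rw [← ContinuousLinearMap.adjoint_inner_left, ← ContinuousLinearMap.star_eq_adjoint, h2.star_eq,
      ← ContinuousLinearMap.adjoint_inner_left T]
    exact congrArg (fun S : E →L[ℂ] E => ⟪S x, x⟫_ℂ) h1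
  rw [inner_self_eq_norm_sq_to_K, inner_self_eq_norm_sq_to_K] at h3
  have h4 : ‖opAbs T x‖ ^ 2 = ‖T x‖ ^ 2 := by exact_mod_cast h3
  exact (pow_left_inj₀ (norm_nonneg _) (norm_nonneg _) two_ne_zero).mp h4

theorem absPow_nonneg [CompleteSpace E] (A : E →L[ℂ] E) (n : ℕ) : 0 ≤ absPow A n :=
  CFC.nnrpow_nonneg (a := opAbs (A ^ n)) (x := ((n : ℝ≥0))⁻¹)

theorem absPow_pow [CompleteSpace E] (A : E →L[ℂ] E) {n : ℕ} (hn : 1 ≤ n) :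
    absPow A n ^ n = opAbs (A ^ n) := by
  have hn0 : (n : ℝ≥0) ≠ 0 := by exact_mod_cast (by omega : n ≠ 0)
  have h1 : (absPow A n) ^ (n : ℝ≥0) = opAbs (A ^ n) :=
    CFC.nnrpow_inv_nnrpow (opAbs (A ^ n)) hn0 (CFC.sqrt_nonneg _)
  rw [← h1, CFC.nnrpow_eq_rpow (by exact_mod_cast hn), NNReal.coe_natCast,
    CFC.rpow_natCast _ _ (absPow_nonneg A n)]

/-- The interpolation estimate: a bound `c ^ n` for `A ^ n` at a vector gives the bound `c` for
`|A ^ n| ^ (1 / n)` at the same vector. -/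
theorem norm_absPow_apply_le [CompleteSpace E] (A : E →L[ℂ] E) {n : ℕ} (hn : 1 ≤ n) {c : ℝ}
    (hc : 0 ≤ c) (x : E) (h : ‖(A ^ n) x‖ ≤ c ^ n * ‖x‖) : ‖absPow A n x‖ ≤ c * ‖x‖ := by
  have h1 := norm_apply_pow_succ_le (absPow A n) (absPow_nonneg A n).isSelfAdjoint x (n - 1)
  rw [Nat.sub_add_cancel hn, absPow_pow A hn, norm_opAbs_apply] at h1
  refine le_of_pow_le_pow_left₀ (by omega : n ≠ 0) (by positivity) (h1.trans ?_)
  calc ‖(A ^ n) x‖ * ‖x‖ ^ (n - 1) ≤ c ^ n * ‖x‖ * ‖x‖ ^ (n - 1) := by gcongr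
    _ = c ^ n * (‖x‖ ^ (n - 1 + 1)) := by ring
    _ = (c * ‖x‖) ^ n := by rw [Nat.sub_add_cancel hn, mul_pow]

/-! ### Uniform smallness and collective compactness -/

theorem isCompactOperator_pow [CompleteSpace E] (A : E →L[ℂ] E) (hA : IsCompactOperator A) {n : ℕ}
    (hn : 1 ≤ n) : IsCompactOperator (A ^ n) := by
  obtain ⟨k, rfl⟩ := Nat.exists_eq_add_of_le' hn
  rw [pow_succ']
  exact hA.comp_clm (A ^ k)

theorem exists_finiteDimensional_absPow_small [CompleteSpace E] (A : E →L[ℂ] E)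
    (hA : IsCompactOperator A) {ε : ℝ} (hε : 0 < ε) :
    ∃ W : Submodule ℂ E, FiniteDimensional ℂ W ∧
      ∀ n : ℕ, 1 ≤ n → ∀ m ∈ Wᗮ, ‖absPow A n m‖ ≤ ε * ‖m‖ := by
  obtain ⟨W₀, hW₀, N, hN⟩ := exists_finiteDimensional_pow_decay A hA hε
  have hsmall : ∀ n : ℕ, ∃ W : Submodule ℂ E, FiniteDimensional ℂ W ∧
      (1 ≤ n → ∀ m ∈ Wᗮ, ‖absPow A n m‖ ≤ ε * ‖m‖) := by
    intro n
    rcases Nat.eq_zero_or_pos n with rfl | hn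
    · exact ⟨⊥, inferInstance, fun h => absurd h (by norm_num)⟩
    · obtain ⟨W, hW, h⟩ :=
        exists_finiteDimensional_small (A ^ n) (isCompactOperator_pow A hA hn) (pow_pos hε n)
      exact ⟨W, hW, fun _ m hm => norm_absPow_apply_le A hn hε.le m (h m hm)⟩
  choose W hW hWs using hsmall
  refine ⟨W₀ ⊔ (Finset.range N).sup W, inferInstance, fun n hn m hm => ?_⟩
  rcases lt_or_ge n N with h | h
  · have hle : W n ≤ W₀ ⊔ (Finset.range N).sup W :=
      (Finset.le_sup (Finset.mem_range.mpr h)).trans le_sup_right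
    exact hWs n hn m (Submodule.orthogonal_le hle hm)
  · exact norm_absPow_apply_le A hn hε.le m
      (hN n h m (Submodule.orthogonal_le le_sup_left hm))

end

/-- For a compact operator `A` with `‖A‖ < 1`, the family `{|A^n|^{1/n} : n ≥ 1}` is
collectively compact: the set `{|A^n|^{1/n} x : n ≥ 1, ‖x‖ ≤ 1}` has compact closure. -/
theorem abspow_collectively_compact {H : Type*} [NormedAddCommGroup H]
    [InnerProductSpace ℂ H] [CompleteSpace H] [TopologicalSpace.SeparableSpace H]
    (A : H →L[ℂ] H) (hA : IsCompactOperator (⇑A)) (hnorm : ‖A‖ < 1) :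
    IsCompact (closure {y : H | ∃ n : ℕ, 1 ≤ n ∧ ∃ x : H, ‖x‖ ≤ 1 ∧ y = absPow A n x}) := by
  have h := totallyBounded_adjoint_image {T : H →L[ℂ] H | ∃ n : ℕ, 1 ≤ n ∧ T = absPow A n} 1 ?_ ?_
  · refine (h.subset ?_).closure.isCompact_of_isClosed isClosed_closure
    rintro y ⟨n, hn, x, hx, rfl⟩
    refine ⟨absPow A n, ⟨n, hn, rfl⟩, x, hx, ?_⟩
    rw [← ContinuousLinearMap.star_eq_adjoint, (absPow_nonneg A n).isSelfAdjoint.star_eq]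
  · rintro _ ⟨n, hn, rfl⟩
    refine ContinuousLinearMap.opNorm_le_bound _ zero_le_one fun x =>
      norm_absPow_apply_le A hn zero_le_one x ?_
    calc ‖(A ^ n) x‖ ≤ ‖A ^ n‖ * ‖x‖ := ContinuousLinearMap.le_opNorm _ _
      _ ≤ 1 ^ n * ‖x‖ := by
        gcongr
        exact (norm_pow_le' A hn).trans (by gcongr)
  · intro ε hε
    obtain ⟨W, hW, h⟩ := exists_finiteDimensional_absPow_small A hA hε
    refine ⟨W, hW, ?_⟩
    rintro _ ⟨n, hn, rfl⟩ m hm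
    exact h n hn m hm
end

section
/- Let T be the weighted shift operator on ℓ²(ℕ) defined on the standard orthonormal basis (e_i)_{i≥1} by T e₁ = e₂/2, T e_{2^n} = e_{2^n+1}/2^{2^n−1} for n ≥ 1, and T e_i = 2 e_{i+1} for all other indices i. Then for every n ≥ 2, ⟨|T^{2^n}|^{1/2^n} e₁, e₁⟩ = 1/2 and ⟨|T^{2^n−1}|^{1/(2^n−1)} e₁, e₁⟩ = 2^{−1/(2^n−1)}; consequently the sequence (⟨|T^m|^{1/m} e₁, e₁⟩)_{m≥1} has two subsequences converging to 1/2 and to 1, respectively, and hence (|T^m|^{1/m}) does not converge in the weak operator topology. -/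
/-!
The `m`-th power of the shift multiplies `e j` by a product of `m` consecutive weights and moves
it to `e (j + m)`, so `(T ^ m)⋆ T ^ m` is diagonal; its eigenvalue at `e 0` is `p²`, where `p` is
the product of the first `m` weights (`shift_pow_apply`, `adjoint_mul_shift_pow`).

If `C = |S| ^ (1 / m)`, then `C` is positive and `C ^ (2 * m) = S⋆ S`. An eigenvector `x` of
`C ^ N` with eigenvalue `q ^ N`, `q > 0`, is an eigenvector of the positive operator `C` with
eigenvalue `q`, because `C ^ N - q ^ N = (∑ i < N, C ^ i q ^ (N - 1 - i)) (C - q)` and the sum is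
bounded below by `q ^ (N - 1) > 0` (`eigenvector_of_pow`). Hence `|T ^ m| ^ (1 / m)` maps `e 0` to
`q • e 0` with `q ^ m = p`.

The weight at index `2 ^ (n + 1) - 1` is chosen to restore `p = 2 ^ (-m)` at `m = 2 ^ (n + 1)`,
after the factors `2` in between have brought `p` up to `1 / 2` at `m = 2 ^ (n + 1) - 1`
(`weight_prod`). So `q` is `1 / 2` along the powers of two and `(1 / 2) ^ (1 / m)`, which tends to
`1`, along their predecessors. A weak operator limit would force these two limits to agree.
-/


open scoped NNReal InnerProductSpace
open Filter Topology

section Eigenvectors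

variable {H : Type*} [NormedAddCommGroup H] [InnerProductSpace ℂ H] [CompleteSpace H]

/-- Positive operators have unique positive `N`-th roots, at the level of a single eigenvector. -/
lemma eigenvector_of_pow {C : H →L[ℂ] H} (hC : 0 ≤ C) {q : ℝ} (hq : 0 < q) {N : ℕ} (hN : N ≠ 0)
    {x : H} (hx : (C ^ N) x = ((q : ℂ) ^ N) • x) : C x = (q : ℂ) • x := by
  obtain ⟨M, rfl⟩ := Nat.exists_eq_succ_of_ne_zero hN
  set D : H →L[ℂ] H := algebraMap ℂ (H →L[ℂ] H) (q : ℂ) with hD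
  have hcomm : Commute C D := (Algebra.commutes (q : ℂ) C).symm
  have hDpow : ∀ k : ℕ, ∀ z : H, (D ^ k) z = ((q : ℂ) ^ k) • z := by
    intro k z
    rw [hD, ← map_pow, Algebra.algebraMap_eq_smul_one]
    simp
  set y : H := (C - D) x with hy
  have hS : (∑ i ∈ Finset.range (M + 1), C ^ i * D ^ (M + 1 - 1 - i)) y = 0 := by
    rw [hy, ← mul_apply_eq_comp, hcomm.geom_sum₂_mul, sub_apply,
      hDpow, hx, sub_self]
  have hterm : ∀ i : ℕ, 0 ≤ RCLike.re ⟪(C ^ i * D ^ (M + 1 - 1 - i)) y, y⟫_ℂ := by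
    intro i
    have hpos : 0 ≤ RCLike.re ⟪(C ^ i) y, y⟫_ℂ :=
      ((ContinuousLinearMap.nonneg_iff_isPositive _).1
        (CStarAlgebra.pow_nonneg hC i)).re_inner_nonneg_left y
    rw [mul_apply_eq_comp, hDpow, map_smul, inner_smul_left, ← Complex.ofReal_pow,
      Complex.conj_ofReal]
    simp only [RCLike.re_to_complex, Complex.re_ofReal_mul] at hpos ⊢
    positivity
  have hsum : ∑ i ∈ Finset.range (M + 1),
      RCLike.re ⟪(C ^ i * D ^ (M + 1 - 1 - i)) y, y⟫_ℂ = 0 := by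
    rw [← map_sum, ← sum_inner, ← sum_apply, hS, inner_zero_left, map_zero]
  -- A vanishing sum of nonnegative terms: the term `i = 0`, equal to `q ^ M * ‖y‖ ^ 2`, vanishes.
  have h0 := (Finset.sum_eq_zero_iff_of_nonneg (fun i _ => hterm i)).1 hsum 0 (by simp)
  rw [pow_zero, one_mul, hDpow, inner_smul_left, ← Complex.ofReal_pow, Complex.conj_ofReal,
    RCLike.re_to_complex, Complex.re_ofReal_mul] at h0
  have h1 : (⟪y, y⟫_ℂ).re = 0 := (mul_eq_zero.1 h0).resolve_left (by positivity)
  have h2 : y = 0 := by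
    rw [← RCLike.re_to_complex, inner_self_eq_norm_sq] at h1
    simpa using h1
  rw [hy, sub_apply, sub_eq_zero] at h2
  have := hDpow 1 x
  rw [pow_one, pow_one] at this
  rw [h2, this]

lemma absPow_nonneg_s18 (T : H →L[ℂ] H) (m : ℕ) : 0 ≤ absPow T m :=
  CFC.nnrpow_nonneg

lemma absPow_pow_s18 (T : H →L[ℂ] H) {m : ℕ} (hm : m ≠ 0) :
    absPow T m ^ (m * 2) = ContinuousLinearMap.adjoint (T ^ m) * T ^ m := by
  have hA : 0 ≤ opAbs (T ^ m) := CFC.sqrt_nonneg _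
  have hm' : (m : ℝ≥0) ≠ 0 := by exact_mod_cast hm
  have h1 : absPow T m ^ m = opAbs (T ^ m) := by
    have h := CFC.nnrpow_inv_nnrpow (opAbs (T ^ m)) hm' hA
    rw [CFC.nnrpow_eq_rpow (by positivity), NNReal.coe_natCast,
      CFC.rpow_natCast _ _ CFC.nnrpow_nonneg] at h
    exact h
  rw [pow_mul, h1, sq]
  refine CFC.sqrt_mul_sqrt_self _ ?_
  rw [← ContinuousLinearMap.star_eq_adjoint]
  exact star_mul_self_nonneg _

lemma absPow_apply_eigenvector {T : H →L[ℂ] H} {m : ℕ} (hm : m ≠ 0) {p q : ℝ} (hq : 0 < q)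
    (hqp : q ^ m = p) {x : H}
    (hx : (ContinuousLinearMap.adjoint (T ^ m) * T ^ m) x = ((p : ℂ) ^ 2) • x) :
    absPow T m x = (q : ℂ) • x := by
  refine eigenvector_of_pow (absPow_nonneg_s18 T m) hq (N := m * 2) (by omega) ?_
  rw [absPow_pow_s18 T hm, hx, pow_mul, ← hqp, Complex.ofReal_pow]

end Eigenvectors

section Shift

variable {T : lp (fun _ : ℕ => ℂ) 2 →L[ℂ] lp (fun _ : ℕ => ℂ) 2}
  {e : ℕ → lp (fun _ : ℕ => ℂ) 2} {w : ℕ → ℝ}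

lemma shift_pow_apply (hT : ∀ i, T (e i) = (w i : ℂ) • e (i + 1)) (m j : ℕ) :
    (T ^ m) (e j) = ((∏ i ∈ Finset.range m, w (j + i) : ℝ) : ℂ) • e (j + m) := by
  induction m with
  | zero => simp
  | succ m ih =>
    rw [pow_succ', mul_apply_eq_comp, ih, map_smul, hT, smul_smul,
      Finset.prod_range_succ, Complex.ofReal_mul, add_assoc]

lemma inner_basis (he : ∀ i : ℕ, e i = lp.single 2 i (1 : ℂ)) (i j : ℕ) :
    ⟪e i, e j⟫_ℂ = if i = j then 1 else 0 := by
  rw [he i, lp.inner_single_left, he j, lp.single_apply]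
  rcases eq_or_ne i j with rfl | h <;> simp [*]

/-- `e 0` is an eigenvector of `(T ^ m)⋆ T ^ m`; this is checked coordinatewise, from the
orthogonality of the vectors `T ^ m (e j)`. -/
lemma adjoint_mul_shift_pow (he : ∀ i : ℕ, e i = lp.single 2 i (1 : ℂ))
    (hT : ∀ i, T (e i) = (w i : ℂ) • e (i + 1)) (m : ℕ) :
    (ContinuousLinearMap.adjoint (T ^ m) * T ^ m) (e 0) =
      (((∏ i ∈ Finset.range m, w i : ℝ) : ℂ) ^ 2) • e 0 := by
  have key : ∀ j, ⟪e j, (ContinuousLinearMap.adjoint (T ^ m) * T ^ m) (e 0)⟫_ℂ =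
      ⟪e j, (((∏ i ∈ Finset.range m, w i : ℝ) : ℂ) ^ 2) • e 0⟫_ℂ := by
    intro j
    rw [mul_apply_eq_comp, ContinuousLinearMap.adjoint_inner_right,
      shift_pow_apply hT, shift_pow_apply hT, inner_smul_left, inner_smul_right, inner_smul_right,
      inner_basis he, inner_basis he, Complex.conj_ofReal]
    rcases eq_or_ne j 0 with rfl | h
    · simp [sq]
    · simp [h]
  ext j
  have hj := key j
  rw [he j, lp.inner_single_left, lp.inner_single_left] at hj
  simpa using hj

lemma inner_absPow (he : ∀ i : ℕ, e i = lp.single 2 i (1 : ℂ))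
    (hT : ∀ i, T (e i) = (w i : ℂ) • e (i + 1)) {m : ℕ} (hm : m ≠ 0) {q : ℝ} (hq : 0 < q)
    (hqp : q ^ m = ∏ i ∈ Finset.range m, w i) :
    ⟪absPow T m (e 0), e 0⟫_ℂ = (q : ℂ) := by
  rw [absPow_apply_eigenvector hm hq hqp (adjoint_mul_shift_pow he hT m), inner_smul_left,
    inner_basis he, Complex.conj_ofReal]
  simp

end Shift

/-- The product of the first `2 ^ n + k` weights, up to the next weight of index
`2 ^ (n + 1) - 1`. -/
lemma weight_prod {w : ℕ → ℝ} (w0 : w 0 = 2⁻¹)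
    (w1 : ∀ n, 1 ≤ n → w (2 ^ n - 1) = (2 ^ (2 ^ n - 1))⁻¹)
    (w2 : ∀ i, i ≠ 0 → (∀ n, 1 ≤ n → i + 1 ≠ 2 ^ n) → w i = 2) (n : ℕ) :
    ∀ k, k < 2 ^ n → ∏ i ∈ Finset.range (2 ^ n + k), w i = (2⁻¹) ^ (2 ^ n) * 2 ^ k := by
  -- Between two exceptional indices every weight is `2`.
  have step : ∀ n, (∏ i ∈ Finset.range (2 ^ n), w i = (2⁻¹) ^ (2 ^ n)) →
      ∀ k, k < 2 ^ n → ∏ i ∈ Finset.range (2 ^ n + k), w i = (2⁻¹) ^ (2 ^ n) * 2 ^ k := by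
    intro n hn k
    induction k with
    | zero => intro _; simpa using hn
    | succ k ih =>
      intro hk
      have hw : w (2 ^ n + k) = 2 := by
        refine w2 _ (by have := Nat.two_pow_pos n; omega) fun l _ hl => ?_
        have h1 : 2 ^ n < 2 ^ l := by omega
        have h2 : 2 ^ l < 2 ^ (n + 1) := by rw [pow_succ]; omega
        have h3 := (Nat.pow_lt_pow_iff_right (by norm_num)).1 h1
        have h4 := (Nat.pow_lt_pow_iff_right (by norm_num)).1 h2
        omega
      rw [← add_assoc, Finset.prod_range_succ, ih (by omega), hw, pow_succ]
      ring
  refine step n ?_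
  induction n with
  | zero => simp [w0]
  | succ n ih =>
    have hpos := Nat.two_pow_pos n
    have h := step n ih (2 ^ n - 1) (by omega)
    have e1 : 2 ^ n + (2 ^ n - 1) = 2 ^ (n + 1) - 1 := by rw [pow_succ]; omega
    have e2 : 2 ^ (n + 1) = (2 ^ (n + 1) - 1) + 1 := by have := Nat.two_pow_pos (n + 1); omega
    rw [e1] at h
    have h' : ∏ i ∈ Finset.range (2 ^ (n + 1) - 1), w i = (2 : ℝ)⁻¹ := by
      obtain ⟨a, ha⟩ := Nat.exists_eq_succ_of_ne_zero hpos.ne'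
      rw [h, ha, Nat.succ_sub_one, pow_succ, mul_right_comm, ← mul_pow]
      simp
    have hw := w1 (n + 1) (by omega)
    generalize 2 ^ (n + 1) - 1 = M at *
    rw [e2, Finset.prod_range_succ, h', hw, pow_succ, inv_pow, mul_comm]

/-- For the weighted shift `T` on `ℓ²(ℕ)` (with 0-indexed standard basis `e i`, so that the
paper's `e_j` is `e (j-1)`) given by `T e₀ = e₁/2`, `T e_{2^n-1} = e_{2^n}/2^{2^n-1}` for
`n ≥ 1`, and `T e_i = 2 e_{i+1}` otherwise: for all `n ≥ 2`,
`⟨|T^{2^n}|^{1/2^n} e₀, e₀⟩ = 1/2` and `⟨|T^{2^n-1}|^{1/(2^n-1)} e₀, e₀⟩ = 2^{-1/(2^n-1)}`;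
consequently the sequence of these inner products has subsequences converging to `1/2` and
to `1`, and `(|T^m|^{1/m})` does not converge in the weak operator topology. -/
theorem weighted_shift_abspow_not_wot_convergent
    (T : lp (fun _ : ℕ => ℂ) 2 →L[ℂ] lp (fun _ : ℕ => ℂ) 2)
    (e : ℕ → lp (fun _ : ℕ => ℂ) 2) (he : ∀ i : ℕ, e i = lp.single 2 i (1 : ℂ))
    (hT0 : T (e 0) = (2 : ℂ)⁻¹ • e 1)
    (hT1 : ∀ n : ℕ, 1 ≤ n → T (e (2 ^ n - 1)) = ((2 : ℂ) ^ (2 ^ n - 1))⁻¹ • e (2 ^ n))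
    (hT2 : ∀ i : ℕ, i ≠ 0 → (∀ n : ℕ, 1 ≤ n → i + 1 ≠ 2 ^ n) → T (e i) = (2 : ℂ) • e (i + 1)) :
    (∀ n : ℕ, 2 ≤ n → ⟪absPow T (2 ^ n) (e 0), e 0⟫_ℂ = 1 / 2) ∧
    (∀ n : ℕ, 2 ≤ n → ⟪absPow T (2 ^ n - 1) (e 0), e 0⟫_ℂ =
      (((2 : ℝ) ^ (-(1 : ℝ) / ((2 : ℝ) ^ n - 1)) : ℝ) : ℂ)) ∧
    (∃ φ ψ : ℕ → ℕ, StrictMono φ ∧ StrictMono ψ ∧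
      Tendsto (fun k : ℕ => ⟪absPow T (φ k) (e 0), e 0⟫_ℂ) atTop (𝓝 (1 / 2)) ∧
      Tendsto (fun k : ℕ => ⟪absPow T (ψ k) (e 0), e 0⟫_ℂ) atTop (𝓝 1)) ∧
    ¬ ∃ B : lp (fun _ : ℕ => ℂ) 2 →L[ℂ] lp (fun _ : ℕ => ℂ) 2,
        ∀ x y : lp (fun _ : ℕ => ℂ) 2,
          Tendsto (fun m : ℕ => ⟪absPow T m x, y⟫_ℂ) atTop (𝓝 ⟪B x, y⟫_ℂ) := by
  classical
  -- The weight sequence of `T`.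
  let w : ℕ → ℝ := fun i =>
    if i = 0 then 2⁻¹ else if ∃ n, 1 ≤ n ∧ i + 1 = 2 ^ n then (2 ^ i)⁻¹ else 2
  have two_le : ∀ n : ℕ, 1 ≤ n → 2 ≤ 2 ^ n := fun n hn => by
    simpa using Nat.pow_le_pow_right (n := 2) (by norm_num) hn
  have w0 : w 0 = 2⁻¹ := by simp [w]
  have w1 : ∀ n, 1 ≤ n → w (2 ^ n - 1) = (2 ^ (2 ^ n - 1))⁻¹ := by
    intro n hn
    have := two_le n hn
    simp only [w]
    rw [if_neg (by omega), if_pos ⟨n, hn, by omega⟩]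
  have w2 : ∀ i, i ≠ 0 → (∀ n, 1 ≤ n → i + 1 ≠ 2 ^ n) → w i = 2 := by
    intro i hi h
    simp only [w]
    rw [if_neg hi, if_neg]
    rintro ⟨n, hn, hin⟩
    exact h n hn hin
  have hT : ∀ i, T (e i) = (w i : ℂ) • e (i + 1) := by
    intro i
    rcases eq_or_ne i 0 with rfl | hi
    · rw [hT0, w0]; simp
    · by_cases h : ∃ n, 1 ≤ n ∧ i + 1 = 2 ^ n
      · obtain ⟨n, hn, hin⟩ := h
        obtain rfl : i = 2 ^ n - 1 := by omega
        rw [hT1 n hn, w1 n hn, hin]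
        simp
      · push Not at h
        rw [hT2 i hi h, w2 i hi h]
        simp
  have A1 : ∀ n : ℕ, 2 ≤ n → ⟪absPow T (2 ^ n) (e 0), e 0⟫_ℂ = 1 / 2 := by
    intro n _
    have h := weight_prod w0 w1 w2 n 0 (Nat.two_pow_pos n)
    rw [add_zero, pow_zero, mul_one] at h
    rw [inner_absPow he hT (Nat.two_pow_pos n).ne' (by norm_num) h.symm]
    simp
  have A2 : ∀ n : ℕ, 2 ≤ n → ⟪absPow T (2 ^ n - 1) (e 0), e 0⟫_ℂ =
      (((2 : ℝ) ^ (-(1 : ℝ) / ((2 : ℝ) ^ n - 1)) : ℝ) : ℂ) := by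
    intro n hn
    obtain ⟨n, rfl⟩ : ∃ k, n = k + 1 := ⟨n - 1, by omega⟩
    have hpos := Nat.two_pow_pos n
    have h2 := two_le (n + 1) (by omega)
    have h := weight_prod w0 w1 w2 n (2 ^ n - 1) (by omega)
    rw [show 2 ^ n + (2 ^ n - 1) = 2 ^ (n + 1) - 1 by rw [pow_succ]; omega] at h
    have hc : ((2 ^ (n + 1) - 1 : ℕ) : ℝ) = (2 : ℝ) ^ (n + 1) - 1 := by
      rw [Nat.cast_sub (by omega)]; push_cast; rfl
    have hne : (2 : ℝ) ^ (n + 1) - 1 ≠ 0 := by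
      rw [← hc]; exact_mod_cast (by omega : 2 ^ (n + 1) - 1 ≠ 0)
    refine inner_absPow he hT (by omega) (by positivity) ?_
    have h' : (2 : ℝ)⁻¹ ^ (2 ^ n) * 2 ^ (2 ^ n - 1) = 2⁻¹ := by
      obtain ⟨a, ha⟩ := Nat.exists_eq_succ_of_ne_zero hpos.ne'
      rw [ha, Nat.succ_sub_one, pow_succ, mul_right_comm, ← mul_pow]
      simp
    rw [h, h', ← Real.rpow_natCast, ← Real.rpow_mul (by norm_num), hc, div_mul_cancel₀ _ hne,
      Real.rpow_neg_one]
  have mono1 : StrictMono fun k : ℕ => 2 ^ (k + 2) := fun a b hab =>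
    Nat.pow_lt_pow_right (by norm_num) (by omega)
  have mono2 : StrictMono fun k : ℕ => 2 ^ (k + 2) - 1 := fun a b hab => by
    have h1 := mono1 hab
    have h2 := Nat.two_pow_pos (a + 2)
    simp only at h1 ⊢
    omega
  have L1 : Tendsto (fun k : ℕ => ⟪absPow T (2 ^ (k + 2)) (e 0), e 0⟫_ℂ) atTop (𝓝 (1 / 2)) := by
    simp_rw [fun k : ℕ => A1 (k + 2) (by omega)]
    exact tendsto_const_nhds
  have L2 : Tendsto (fun k : ℕ => ⟪absPow T (2 ^ (k + 2) - 1) (e 0), e 0⟫_ℂ) atTop (𝓝 1) := by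
    simp_rw [fun k : ℕ => A2 (k + 2) (by omega)]
    have t1 : Tendsto (fun k : ℕ => (2 : ℝ) ^ (k + 2) - 1) atTop atTop :=
      tendsto_atTop_add_const_right _ _
        ((tendsto_pow_atTop_atTop_of_one_lt (by norm_num)).comp (tendsto_add_atTop_nat 2))
    have t2 : Tendsto (fun k : ℕ => -(1 : ℝ) / ((2 : ℝ) ^ (k + 2) - 1)) atTop (𝓝 0) :=
      t1.const_div_atTop _
    have t3 : Tendsto (fun k : ℕ => (2 : ℝ) ^ (-(1 : ℝ) / ((2 : ℝ) ^ (k + 2) - 1))) atTop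
        (𝓝 ((2 : ℝ) ^ (0 : ℝ))) :=
      (Real.continuous_const_rpow (by norm_num)).continuousAt.tendsto.comp t2
    rw [Real.rpow_zero] at t3
    simpa [Function.comp_def] using (Complex.continuous_ofReal.tendsto 1).comp t3
  refine ⟨A1, A2, ⟨_, _, mono1, mono2, L1, L2⟩, ?_⟩
  rintro ⟨B, hB⟩
  have u1 := tendsto_nhds_unique L1 ((hB (e 0) (e 0)).comp mono1.tendsto_atTop)
  have u2 := tendsto_nhds_unique L2 ((hB (e 0) (e 0)).comp mono2.tendsto_atTop)
  have := u1.trans u2.symm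
  norm_num at this
end
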